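/- arXiv:0705.3261 — 10 statements merged into one kernel-verified Lean document; each statement's English description precedes it below -/
import Mathlib

section
/- For every real ρ ≥ 0, the minimum of the two quantities Σ_{k=1}^{L} log₂(1 + ρ(|a|² + |b_k|²)) and log₂ det(I_{L+1} + ρ H Hᴴ) equals log₂ det(I_{L+1} + ρ H Hᴴ); i.e. the sum-rate constraint never binds below the MIMO determinant term, so the achievable rate of the successive relaying scheme equals (1/(L+1)) log₂ det(I_{L+1} + ρ H Hᴴ). -/
open Matrix Filter
open scoped ComplexOrder

theorem hadamard_aux {n : ℕ} (M : Matrix (Fin n) (Fin n) ℂ) (hM : M.PosSemidef)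
    (d : Fin n → ℝ) (hd : ∀ k, 0 < d k) (hdM : ∀ k, M k k = (d k : ℂ)) :
    M.det.re ≤ ∏ k, d k := by
  set D : Matrix (Fin n) (Fin n) ℂ := diagonal (fun k => (((Real.sqrt (d k))⁻¹ : ℝ) : ℂ)) with hD
  have hB : (Dᴴ * M * D).PosSemidef := hM.conjTranspose_mul_mul_same D
  have hDD : Dᴴ = D := by
    rw [hD, diagonal_conjTranspose]
    congr 1
    ext k
    simp
  rw [hDD] at hB
  have hdiag : ∀ k, (D * M * D) k k = 1 := by
    intro k
    rw [hD, mul_diagonal, diagonal_mul, hdM]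
    norm_cast
    have h1 := Real.sq_sqrt (hd k).le
    have h2 := Real.sqrt_pos.2 (hd k)
    field_simp
    exact h1.symm
  have htr : (D * M * D).trace = (n : ℂ) := by
    simp [trace, hdiag]
  have htr2 : ∑ i, hB.1.eigenvalues i = (n : ℝ) := by
    have := hB.1.trace_eq_sum_eigenvalues
    rw [htr] at this
    have h2 := congrArg Complex.re this
    simpa using h2.symm
  have hdetB : (D * M * D).det = ((∏ i, hB.1.eigenvalues i : ℝ) : ℂ) := by
    rw [hB.1.det_eq_prod_eigenvalues]
    push_cast
    rfl
  have hle : ∏ i, hB.1.eigenvalues i ≤ 1 := by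
    calc ∏ i, hB.1.eigenvalues i ≤ ∏ i, Real.exp (hB.1.eigenvalues i - 1) :=
          Finset.prod_le_prod (fun i _ => hB.eigenvalues_nonneg i)
            (fun i _ => by linarith [Real.add_one_le_exp (hB.1.eigenvalues i - 1)])
      _ = 1 := by
          rw [← Real.exp_sum, Finset.sum_sub_distrib, htr2]
          simp
  have hdet : (D * M * D).det = (((∏ k, d k)⁻¹ : ℝ) : ℂ) * M.det := by
    have : D.det * D.det = (((∏ k, d k)⁻¹ : ℝ) : ℂ) := by
      rw [hD, det_diagonal, ← Finset.prod_mul_distrib, ← Finset.prod_inv_distrib]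
      push_cast
      refine Finset.prod_congr rfl fun k _ => ?_
      norm_cast
      rw [← mul_inv, Real.mul_self_sqrt (hd k).le]
    rw [det_mul, det_mul, ← this]
    ring
  have hP : 0 < ∏ k, d k := Finset.prod_pos fun k _ => hd k
  have h3 := congrArg Complex.re (hdet.symm.trans hdetB)
  rw [Complex.re_ofReal_mul, Complex.ofReal_re] at h3
  rw [← h3, inv_mul_le_iff₀ hP] at hle
  simpa using hle

/-- For the successive-relaying channel matrix `H` (with `a` on the
diagonal and `b k` on the subdiagonal), for every `ρ ≥ 0` the minimum of the
sum-rate term `∑ k, log₂(1 + ρ(|a|² + |b k|²))` and the MIMO determinant term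
`log₂ det(I + ρ H Hᴴ)` equals the determinant term; hence the achievable rate
equals `(1/(L+1)) log₂ det(I + ρ H Hᴴ)`. -/
theorem stmt0 (L : ℕ) (hL : 1 ≤ L) (a : ℂ) (b : Fin L → ℂ)
    (H : Matrix (Fin (L + 1)) (Fin L) ℂ)
    (hH : ∀ i j, H i j =
      if (i : ℕ) = (j : ℕ) then a else if (i : ℕ) = (j : ℕ) + 1 then b j else 0)
    (ρ : ℝ) (hρ : 0 ≤ ρ) :
    min (∑ k : Fin L, Real.logb 2 (1 + ρ * (‖a‖ ^ 2 + ‖b k‖ ^ 2)))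
        (Real.logb 2 ((1 + (ρ : ℂ) • (H * H.conjTranspose)).det).re)
      = Real.logb 2 ((1 + (ρ : ℂ) • (H * H.conjTranspose)).det).re ∧
    (1 / (L + 1 : ℝ)) *
      min (∑ k : Fin L, Real.logb 2 (1 + ρ * (‖a‖ ^ 2 + ‖b k‖ ^ 2)))
        (Real.logb 2 ((1 + (ρ : ℂ) • (H * H.conjTranspose)).det).re)
      = (1 / (L + 1 : ℝ)) *
          Real.logb 2 ((1 + (ρ : ℂ) • (H * H.conjTranspose)).det).re := by
  have key : Real.logb 2 ((1 + (ρ : ℂ) • (H * H.conjTranspose)).det).re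
      ≤ ∑ k : Fin L, Real.logb 2 (1 + ρ * (‖a‖ ^ 2 + ‖b k‖ ^ 2)) := by
    have hsyl : (1 + (ρ : ℂ) • (H * H.conjTranspose)).det
        = (1 + (ρ : ℂ) • (H.conjTranspose * H)).det := by
      rw [← Matrix.smul_mul, det_one_add_mul_comm, Matrix.mul_smul]
    have hρ' : (0 : ℂ) ≤ (ρ : ℂ) := by exact_mod_cast hρ
    have hpd : (1 + (ρ : ℂ) • (H.conjTranspose * H)).PosDef :=
      PosDef.one.add_posSemidef ((posSemidef_conjTranspose_mul_self H).smul hρ')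
    have hpos : 0 < (1 + (ρ : ℂ) • (H.conjTranspose * H)).det.re :=
      (Complex.lt_def.1 hpd.det_pos).1
    have hd : ∀ k : Fin L, 0 < 1 + ρ * (‖a‖ ^ 2 + ‖b k‖ ^ 2) := fun k => by positivity
    rw [hsyl, ← Real.logb_prod _ _ (fun k _ => (hd k).ne')]
    refine Real.logb_le_logb_of_le (by norm_num) hpos ?_
    refine hadamard_aux _ hpd.posSemidef _ hd fun k => ?_
    have hG : (H.conjTranspose * H) k k = ((‖a‖ ^ 2 + ‖b k‖ ^ 2 : ℝ) : ℂ) := by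
      rw [mul_apply]
      have h0 : ∀ i : Fin (L + 1), H.conjTranspose k i * H i k
          = (if i = k.castSucc then ((‖a‖ ^ 2 : ℝ) : ℂ) else 0)
            + (if i = k.succ then ((‖b k‖ ^ 2 : ℝ) : ℂ) else 0) := by
        intro i
        rw [conjTranspose_apply, hH]
        simp only [Fin.ext_iff, Fin.val_castSucc, Fin.val_succ]
        by_cases h1 : (i : ℕ) = k
        · have h2 : ¬ ((i : ℕ) = k + 1) := by omega
          simp [h1, Complex.conj_mul']
        · by_cases h2 : (i : ℕ) = k + 1
          · simp [h2, Complex.conj_mul']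
          · simp [h1, h2]
      rw [Finset.sum_congr rfl fun i _ => h0 i, Finset.sum_add_distrib]
      simp
    rw [Matrix.add_apply, Matrix.smul_apply, hG, one_apply_eq]
    push_cast
    simp
  rw [min_eq_right key]
  exact ⟨rfl, rfl⟩
end

section
/- For any vectors h₁, …, h_L in ℂᴺ and any real ρ ≥ 0, log₂ det(I_N + ρ Σ_{k=1}^{L} h_k h_kᴴ) ≤ Σ_{k=1}^{L} log₂(1 + ρ‖h_k‖²); equivalently, the sum of the single-stream capacities dominates the joint MIMO capacity term. -/
open Matrix Filter

open scoped ComplexOrder in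
lemma aux_step {N : ℕ} (B : Matrix (Fin N) (Fin N) ℂ) (hB : B.PosSemidef) (v : Fin N → ℂ)
    (c : ℂ) (hc : 0 ≤ c) :
    (1 + B + c • vecMulVec v (star v)).det ≤ (1 + B).det * (1 + c * (star v ⬝ᵥ v)) := by
  have hA : (1 + B).PosDef := Matrix.PosDef.one.add_posSemidef hB
  have hdet : 0 < (1 + B).det := hA.det_pos
  obtain ⟨x, hx⟩ : ∃ x, (1 + B) *ᵥ x = v := by
    refine ⟨(1 + B)⁻¹ *ᵥ v, ?_⟩
    rw [Matrix.mulVec_mulVec, Matrix.mul_nonsing_inv _ (isUnit_iff_ne_zero.2 hdet.ne'),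
      Matrix.one_mulVec]
  have h1 : 1 + B + c • vecMulVec v (star v) = (1 + B) * (1 + vecMulVec (c • x) (star v)) := by
    rw [mul_add, mul_one, Matrix.mul_vecMulVec, Matrix.mulVec_smul, hx, smul_vecMulVec]
  have h2 : (1 + vecMulVec (c • x) (star v)).det = 1 + c * (star v ⬝ᵥ x) := by
    rw [vecMulVec_eq Unit, det_one_add_replicateCol_mul_replicateRow, dotProduct_smul, smul_eq_mul]
  rw [h1, det_mul, h2]
  refine mul_le_mul_of_nonneg_left ?_ hdet.le
  refine add_le_add le_rfl (mul_le_mul_of_nonneg_left ?_ hc)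
  have hv : v = x + B *ᵥ x := by rw [← hx, Matrix.add_mulVec, Matrix.one_mulVec]
  have h3 : star v ⬝ᵥ v = star v ⬝ᵥ x + (star x ⬝ᵥ (B *ᵥ x) + star (B *ᵥ x) ⬝ᵥ (B *ᵥ x)) := by
    nth_rewrite 2 [hv]
    rw [dotProduct_add]
    congr 1
    rw [hv, star_add, add_dotProduct]
  rw [h3]
  exact le_add_of_nonneg_right
    (add_nonneg (hB.dotProduct_mulVec_nonneg x) (dotProduct_star_self_nonneg _))

open scoped ComplexOrder in
lemma aux_prod {N L : ℕ} (h : Fin L → Fin N → ℂ) (c : ℂ) (hc : 0 ≤ c) (s : Finset (Fin L)) :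
    (1 + c • ∑ k ∈ s, vecMulVec (h k) (star (h k))).det
      ≤ ∏ k ∈ s, (1 + c * (star (h k) ⬝ᵥ h k)) := by
  classical
  induction s using Finset.induction_on with
  | empty => simp
  | insert a s ha ih =>
    rw [Finset.sum_insert ha, Finset.prod_insert ha, smul_add, add_comm (c • _), ← add_assoc,
      mul_comm]
    refine (aux_step _ ((posSemidef_sum s fun k _ =>
      posSemidef_vecMulVec_self_star (h k)).smul hc) (h a) c hc).trans ?_
    exact mul_le_mul_of_nonneg_right ih
      (add_nonneg zero_le_one (mul_nonneg hc (dotProduct_star_self_nonneg _)))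

open scoped ComplexOrder in
/-- For any vectors `h₁, …, h_L` in `ℂᴺ` and any `ρ ≥ 0`,
`log₂ det(I_N + ρ ∑ₖ hₖ hₖᴴ) ≤ ∑ₖ log₂(1 + ρ ‖hₖ‖²)`. -/
theorem stmt1 (N L : ℕ) (h : Fin L → Fin N → ℂ) (ρ : ℝ) (hρ : 0 ≤ ρ) :
    Real.logb 2 ((1 + (ρ : ℂ) • ∑ k : Fin L,
        Matrix.vecMulVec (h k) (star (h k))).det).re
      ≤ ∑ k : Fin L, Real.logb 2 (1 + ρ * ∑ i : Fin N, ‖h k i‖ ^ 2) := by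
  have hc : (0 : ℂ) ≤ (ρ : ℂ) := by exact_mod_cast hρ
  have hpos : 0 < (1 + (ρ : ℂ) • ∑ k : Fin L, vecMulVec (h k) (star (h k))).det :=
    (Matrix.PosDef.one.add_posSemidef ((posSemidef_sum Finset.univ fun k _ =>
      posSemidef_vecMulVec_self_star (h k)).smul hc)).det_pos
  have hle := aux_prod h (ρ : ℂ) hc Finset.univ
  have hn : ∀ k, star (h k) ⬝ᵥ h k = ((∑ i : Fin N, ‖h k i‖ ^ 2 : ℝ) : ℂ) := by
    intro k
    simp [dotProduct, Complex.conj_mul']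
  have he : ∏ k, (1 + (ρ : ℂ) * (star (h k) ⬝ᵥ h k))
      = ((∏ k, (1 + ρ * ∑ i : Fin N, ‖h k i‖ ^ 2) : ℝ) : ℂ) := by
    simp only [hn]
    push_cast
    rfl
  rw [he] at hle
  have hle' := (Complex.le_def.1 hle).1
  rw [Complex.ofReal_re] at hle'
  rw [← Real.logb_prod _ _ (fun k _ => by positivity)]
  exact Real.logb_le_logb_of_le (by norm_num) (Complex.pos_iff.1 hpos).1 hle'
end

section
/- For any vectors h₁, …, h_M in ℂᴺ and any real ρ ≥ 0, define for each i the (real, nonnegative) output signal-to-interference-plus-noise ratio SINR_i = ρ · h_iᴴ (I_N + ρ Σ_{j>i} h_j h_jᴴ)^{-1} h_i of the i-th stage of successive MMSE interference cancellation. Then det(I_N + ρ Σ_{i=1}^{M} h_i h_iᴴ) = Π_{i=1}^{M} (1 + SINR_i); in particular log₂ det(I_N + ρ Σ_{i=1}^{M} h_i h_iᴴ) = Σ_{i=1}^{M} log₂(1 + SINR_i), so V-BLAST MMSE detection with per-stream rates log₂(1 + SINR_i) achieves the MIMO capacity. -/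
open Matrix Filter

open scoped ComplexOrder in
theorem posDef_aux {N : ℕ} {ι : Type*} (s : Finset ι) (h : ι → Fin N → ℂ) (ρ : ℝ) (hρ : 0 ≤ ρ) :
    (1 + (ρ : ℂ) • ∑ j ∈ s, Matrix.vecMulVec (h j) (star (h j))).PosDef := by
  refine Matrix.PosDef.one.add_posSemidef (Matrix.PosSemidef.smul ?_ ?_)
  · exact Matrix.posSemidef_sum s (fun i _ => Matrix.posSemidef_vecMulVec_self_star (h i))
  · exact_mod_cast hρ

theorem det_step {N : ℕ} (A : Matrix (Fin N) (Fin N) ℂ) (hA : IsUnit A.det) (v : Fin N → ℂ)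
    (c : ℂ) : (A + c • Matrix.vecMulVec v (star v)).det
      = A.det * (1 + c * (star v ⬝ᵥ A⁻¹.mulVec v)) := by
  rw [← Matrix.smul_vecMulVec, Matrix.vecMulVec_eq Unit,
    Matrix.det_add_replicateCol_mul_replicateRow hA]
  congr 1
  rw [Matrix.det_unique, Matrix.add_apply, Matrix.one_apply_eq, Matrix.mul_assoc]
  congr 1
  rw [← Matrix.replicateCol_mulVec, Matrix.mulVec_smul]
  rw [← smul_eq_mul, ← dotProduct_smul]
  rfl

open scoped ComplexOrder in
theorem nonneg_aux {N : ℕ} {ι : Type*} (s : Finset ι) (h : ι → Fin N → ℂ) (v : Fin N → ℂ)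
    (ρ : ℝ) (hρ : 0 ≤ ρ) :
    0 ≤ (star v ⬝ᵥ (1 + (ρ : ℂ) • ∑ j ∈ s, Matrix.vecMulVec (h j) (star (h j)))⁻¹.mulVec v).re :=
  (Complex.le_def.1 ((posDef_aux s h ρ hρ).inv.posSemidef.dotProduct_mulVec_nonneg v)).1

open scoped ComplexOrder in
theorem main_aux (N : ℕ) (ρ : ℝ) (hρ : 0 ≤ ρ) : ∀ (M : ℕ) (h : Fin M → Fin N → ℂ)
    (SINR : Fin M → ℝ)
    (_ : ∀ i, SINR i = ρ *
      (star (h i) ⬝ᵥ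
        ((1 + (ρ : ℂ) • ∑ j ∈ Finset.univ.filter (fun j => i < j),
            Matrix.vecMulVec (h j) (star (h j)))⁻¹).mulVec (h i)).re),
    (1 + (ρ : ℂ) • ∑ i : Fin M, Matrix.vecMulVec (h i) (star (h i))).det
        = ((∏ i : Fin M, (1 + SINR i) : ℝ) : ℂ) := by
  intro M
  induction M with
  | zero => intro h S hS; simp
  | succ M ih =>
    intro h S hS
    have h1 := ih (fun i => h i.succ) (fun i => S i.succ) (by
      intro i
      rw [hS i.succ]
      simp only [Finset.sum_filter, Fin.sum_univ_succ, Fin.succ_lt_succ_iff, Fin.not_lt_zero,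
        if_false, zero_add])
    have h0 := hS 0
    simp only [Finset.sum_filter, Fin.sum_univ_succ, Fin.succ_pos, lt_irrefl,
        if_false, if_true, zero_add] at h0
    have hP := posDef_aux Finset.univ (fun i : Fin M => h i.succ) ρ hρ
    have hq := hP.inv.posSemidef.dotProduct_mulVec_nonneg (h 0)
    rw [Fin.sum_univ_succ, Fin.prod_univ_succ, add_comm (vecMulVec _ _), smul_add, ← add_assoc,
      det_step _ ((Matrix.isUnit_iff_isUnit_det _).1 hP.isUnit), h1, h0]
    have hr := Complex.eq_re_of_ofReal_le (r := 0) (Complex.ofReal_zero.symm ▸ hq :)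
    rw [Complex.ofReal_mul, Complex.ofReal_add, Complex.ofReal_mul, ← hr, Complex.ofReal_one,
      mul_comm]

/-- With `SINR i = ρ · hᵢᴴ (I + ρ ∑_{j>i} hⱼ hⱼᴴ)⁻¹ hᵢ` (the output
SINR of the i-th stage of successive MMSE interference cancellation),
`det(I + ρ ∑ᵢ hᵢ hᵢᴴ) = ∏ᵢ (1 + SINR i)`, and taking `log₂`,
`log₂ det(I + ρ ∑ᵢ hᵢ hᵢᴴ) = ∑ᵢ log₂(1 + SINR i)`. -/
theorem stmt2 (N M : ℕ) (h : Fin M → Fin N → ℂ) (ρ : ℝ) (hρ : 0 ≤ ρ)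
    (SINR : Fin M → ℝ)
    (hSINR : ∀ i, SINR i = ρ *
      (star (h i) ⬝ᵥ
        ((1 + (ρ : ℂ) • ∑ j ∈ Finset.univ.filter (fun j => i < j),
            Matrix.vecMulVec (h j) (star (h j)))⁻¹).mulVec (h i)).re) :
    ((1 + (ρ : ℂ) • ∑ i : Fin M, Matrix.vecMulVec (h i) (star (h i))).det).re
        = ∏ i : Fin M, (1 + SINR i) ∧
    Real.logb 2 ((1 + (ρ : ℂ) • ∑ i : Fin M,
        Matrix.vecMulVec (h i) (star (h i))).det).re
      = ∑ i : Fin M, Real.logb 2 (1 + SINR i) := by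
  have hd := main_aux N ρ hρ M h SINR hSINR
  rw [hd, Complex.ofReal_re]
  refine ⟨rfl, Real.logb_prod _ _ ?_⟩
  intro i _
  have hq := nonneg_aux (Finset.univ.filter (fun j => i < j)) h (h i) ρ hρ
  have := mul_nonneg hρ hq
  have h2 : 0 ≤ SINR i := by rw [hSINR i]; exact this
  positivity
end

section
/- For every real ρ ≥ 0, det(I_{m+1} + ρ H Hᴴ) ≥ (ρ|a|²)^m + Π_{j=1}^{m} (1 + ρ|b_j|²). In particular det(I_{m+1} + ρ H Hᴴ) ≥ max{(ρ|a|²)^m, Π_{j=1}^{m}(1 + ρ|b_j|²)}. -/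
open Matrix Filter

def tri (d e f : ℕ → ℂ) (n : ℕ) : Matrix (Fin n) (Fin n) ℂ :=
  Matrix.of fun i j => if (i : ℕ) = j then d i else if (j : ℕ) = i + 1 then e i
    else if (i : ℕ) = j + 1 then f j else 0

lemma tri_shift (d e f : ℕ → ℂ) (n : ℕ) :
    (tri d e f (n+1)).submatrix Fin.succ Fin.succ =
      tri (fun k => d (k+1)) (fun k => e (k+1)) (fun k => f (k+1)) n := by
  ext i j
  simp [tri]

lemma tri_det (d e f : ℕ → ℂ) (n : ℕ) :
    (tri d e f (n+2)).det =
      d 0 * (tri (fun k => d (k+1)) (fun k => e (k+1)) (fun k => f (k+1)) (n+1)).det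
      - e 0 * f 0 *
        (tri (fun k => d (k+2)) (fun k => e (k+2)) (fun k => f (k+2)) n).det := by
  have h2 : ((tri d e f (n+2)).submatrix Fin.succ (Fin.succAbove 1)).det =
      f 0 * (tri (fun k => d (k+2)) (fun k => e (k+2)) (fun k => f (k+2)) n).det := by
    rw [Matrix.det_succ_column_zero, Fin.sum_univ_succ, Finset.sum_eq_zero]
    · have hs : ((tri d e f (n+2)).submatrix Fin.succ (Fin.succAbove 1)).submatrix
          (Fin.succAbove 0) Fin.succ =
          tri (fun k => d (k+2)) (fun k => e (k+2)) (fun k => f (k+2)) n := by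
        ext i j
        simp [tri, Fin.succAbove, Fin.lt_def]
      rw [hs]
      simp [tri]
    · intro i _
      simp [tri]
  rw [Matrix.det_succ_row_zero, Fin.sum_univ_succ, Fin.sum_univ_succ, Finset.sum_eq_zero]
  · have h1 := tri_shift d e f (n+1)
    have e1 : (Fin.succAbove (0 : Fin (n+2))) = Fin.succ := by ext; simp
    have e2 : (Fin.succ (0 : Fin (n+1))) = 1 := rfl
    rw [e1, h1, e2, h2]
    simp [tri]
    ring
  · intro i _
    simp [tri]

noncomputable def gtri (a : ℂ) (ρ : ℝ) (b : ℕ → ℂ) (n : ℕ) : Matrix (Fin n) (Fin n) ℂ :=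
  tri (fun k => ((1 + ρ * ‖a‖^2 + ρ * ‖b k‖^2 : ℝ) : ℂ))
    (fun k => ρ * (star (b k) * a)) (fun k => ρ * (star a * b k)) n

lemma main_rec (a : ℂ) (ρ : ℝ) (hρ : 0 ≤ ρ) (n : ℕ) : ∀ b : ℕ → ℂ,
    ∃ x y : ℝ,
      (gtri a ρ (fun k => b (k+1)) n).det = x ∧
      (gtri a ρ b (n+1)).det = y ∧
      (ρ * ‖a‖^2)^n ≤ x ∧
      ∏ k ∈ Finset.range (n+1), (1 + ρ * ‖b k‖^2) ≤ y - ρ * ‖a‖^2 * x := by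
  have hA : 0 ≤ ρ * ‖a‖^2 := by positivity
  induction n with
  | zero =>
    intro b
    refine ⟨1, 1 + ρ * ‖a‖^2 + ρ * ‖b 0‖^2, by simp, by simp [gtri, tri], by simp, ?_⟩
    simp
    linarith
  | succ n ih =>
    intro b
    obtain ⟨x, y, hx, hy, h1, h2⟩ := ih (fun k => b (k+1))
    have hP : 0 ≤ ∏ k ∈ Finset.range (n+1), (1 + ρ * ‖b (k+1)‖^2) :=
      Finset.prod_nonneg fun _ _ => by positivity
    have hB : 0 ≤ ρ * ‖b 0‖^2 := by positivity
    have hx0 : 0 ≤ x := le_trans (by positivity) h1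
    refine ⟨y, (1 + ρ * ‖a‖^2 + ρ * ‖b 0‖^2) * y - (ρ * ‖a‖^2) * (ρ * ‖b 0‖^2) * x,
      hy, ?_, ?_, ?_⟩
    · have h := tri_det (fun k => ((1 + ρ * ‖a‖^2 + ρ * ‖b k‖^2 : ℝ) : ℂ))
        (fun k => ρ * (star (b k) * a)) (fun k => ρ * (star a * b k)) n
      unfold gtri at hx hy ⊢
      rw [h, hx, hy]
      have ha := Complex.mul_conj' a
      have hb := Complex.mul_conj' (b 0)
      push_cast
      rw [← ha, ← hb]
      simp only [Complex.star_def]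
      ring
    · rw [pow_succ]
      have := mul_le_mul_of_nonneg_left h1 hA
      linarith
    · rw [Finset.prod_range_succ']
      have := mul_le_mul_of_nonneg_right h2 hB
      have hx2 : 0 ≤ ρ * ‖a‖^2 * x := by positivity
      nlinarith

lemma gram_eq (m : ℕ) (a : ℂ) (b : ℕ → ℂ)
    (H : Matrix (Fin (m + 1)) (Fin m) ℂ)
    (hH : ∀ i j, H i j =
      if (i : ℕ) = (j : ℕ) then a else if (i : ℕ) = (j : ℕ) + 1 then b j else 0)
    (ρ : ℝ) : 1 + H.conjTranspose * ((ρ : ℂ) • H) = gtri a ρ b m := by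
  ext i j
  have hs : ∀ k, star (H k i) = (if k = i.castSucc then star a else 0)
      + (if k = i.succ then star (b i) else 0) := by
    intro k
    rw [hH]
    simp only [Fin.ext_iff, Fin.val_castSucc, Fin.val_succ]
    split_ifs <;> first | omega | simp
  simp only [Matrix.add_apply, Matrix.mul_apply, Matrix.conjTranspose_apply, hs, add_mul,
    Finset.sum_add_distrib, ite_mul, zero_mul, Finset.sum_ite_eq',
    Finset.mem_univ, if_true, Matrix.smul_apply, smul_eq_mul]
  simp only [hH, Matrix.one_apply, gtri, tri,
    Matrix.of_apply, Fin.ext_iff, Fin.val_castSucc, Fin.val_succ]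
  have ha := Complex.mul_conj' a
  have hb := Complex.mul_conj' (b i)
  split_ifs <;> first | omega | skip
  all_goals simp only [Complex.star_def]
  all_goals try (have hij : i = j := Fin.ext (by omega); subst hij)
  all_goals push_cast
  all_goals try rw [← ha, ← hb]
  all_goals ring

/-- For the successive-relaying channel matrix `H` of size
`(m+1) × m`, for every `ρ ≥ 0`,
`det(I + ρ H Hᴴ) ≥ (ρ|a|²)^m + ∏ⱼ (1 + ρ|bⱼ|²)`, and in particular it is at
least `max{(ρ|a|²)^m, ∏ⱼ (1 + ρ|bⱼ|²)}`. -/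
theorem stmt4 (m : ℕ) (hm : 1 ≤ m) (a : ℂ) (b : Fin m → ℂ)
    (H : Matrix (Fin (m + 1)) (Fin m) ℂ)
    (hH : ∀ i j, H i j =
      if (i : ℕ) = (j : ℕ) then a else if (i : ℕ) = (j : ℕ) + 1 then b j else 0)
    (ρ : ℝ) (hρ : 0 ≤ ρ) :
    (ρ * ‖a‖ ^ 2) ^ m + ∏ j : Fin m, (1 + ρ * ‖b j‖ ^ 2)
      ≤ ((1 + (ρ : ℂ) • (H * H.conjTranspose)).det).re ∧
    max ((ρ * ‖a‖ ^ 2) ^ m) (∏ j : Fin m, (1 + ρ * ‖b j‖ ^ 2))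
      ≤ ((1 + (ρ : ℂ) • (H * H.conjTranspose)).det).re := by
  have hA : 0 ≤ ρ * ‖a‖^2 := by positivity
  have hP : 0 ≤ ∏ j : Fin m, (1 + ρ * ‖b j‖ ^ 2) :=
    Finset.prod_nonneg fun _ _ => by positivity
  have hAm : 0 ≤ (ρ * ‖a‖ ^ 2) ^ m := by positivity
  have key : (ρ * ‖a‖ ^ 2) ^ m + ∏ j : Fin m, (1 + ρ * ‖b j‖ ^ 2)
      ≤ ((1 + (ρ : ℂ) • (H * H.conjTranspose)).det).re := by
    obtain ⟨n, rfl⟩ : ∃ n, m = n + 1 := ⟨m - 1, by omega⟩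
    let b' : ℕ → ℂ := fun k => if h : k < n + 1 then b ⟨k, h⟩ else 0
    have hb' : ∀ j : Fin (n+1), b' j = b j := fun j => by simp only [b', j.isLt, dif_pos]
    rw [← Matrix.smul_mul, Matrix.det_one_add_mul_comm,
      gram_eq (n+1) a b' H (fun i j => by rw [hH, hb']) ρ]
    obtain ⟨x, y, hx, hy, h1, h2⟩ := main_rec a ρ hρ n b'
    rw [hy, Complex.ofReal_re]
    rw [Finset.prod_range] at h2
    simp only [hb'] at h2
    have := mul_le_mul_of_nonneg_left h1 hA
    rw [pow_succ]
    linarith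
  exact ⟨key, max_le (by linarith) (by linarith)⟩
end

section
/- The L×L Gram matrix HᴴH satisfies det(HᴴH) = Σ_{k=0}^{L} |a|^{2k} · Π_{j=k+1}^{L} |b_j|² (where the empty product for k = L equals 1). In particular, if a ≠ 0 then det(HᴴH) ≥ |a|^{2L} > 0, so H has full column rank L. -/
open Matrix Filter

/-- tridiagonal entries -/
def gE (a : ℂ) (b : ℕ → ℂ) (i j : ℕ) : ℂ :=
  if i = j then star a * a + star (b i) * b i else
  if j = i + 1 then star (b i) * a else
  if i = j + 1 then star a * b j else 0

def gM (a : ℂ) (b : ℕ → ℂ) (n s : ℕ) : Matrix (Fin n) (Fin n) ℂ :=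
  Matrix.of fun i j => gE a b (i + s) (j + s)

lemma gM_rec (a : ℂ) (b : ℕ → ℂ) (n s : ℕ) :
    (gM a b (n+2) s).det = (star a * a + star (b s) * b s) * (gM a b (n+1) (s+1)).det
      - (star a * a) * (star (b s) * b s) * (gM a b n (s+2)).det := by
  rw [Matrix.det_succ_row_zero, Fin.sum_univ_succ, Fin.sum_univ_succ, Finset.sum_eq_zero]
  · have h0 : (gM a b (n+2) s).submatrix Fin.succ (Fin.succAbove 0) = gM a b (n+1) (s+1) := by
      ext i j
      simp [gM, add_assoc, add_comm 1 s]
    have h1 : ((gM a b (n+2) s).submatrix Fin.succ (Fin.succAbove (Fin.succ 0))).det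
        = star a * b s * (gM a b n (s+2)).det := by
      rw [Matrix.det_succ_column_zero, Fin.sum_univ_succ, Finset.sum_eq_zero]
      · have h2 : ((gM a b (n+2) s).submatrix Fin.succ (Fin.succAbove (Fin.succ 0))).submatrix
            (Fin.succAbove 0) Fin.succ = gM a b n (s+2) := by
          ext i j
          have : ((Fin.succAbove (Fin.succ 0) (Fin.succ j) : Fin (n+2)) : ℕ) = j + 2 := by
            simp
          simp only [gM, submatrix_apply, of_apply, this]
          simp only [Fin.zero_succAbove, Fin.val_succ]
          congr 1 <;> ring
        rw [h2]
        have : ((Fin.succAbove (Fin.succ 0) 0 : Fin (n+2)) : ℕ) = 0 := by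
          simp
        simp only [gM, submatrix_apply, of_apply, this, gE]
        simp [add_comm]
        intro h
        omega
      · intro i _
        have : ((Fin.succAbove (Fin.succ 0) 0 : Fin (n+2)) : ℕ) = 0 := by
          simp
        simp only [gM, submatrix_apply, of_apply, this, gE]
        rw [if_neg, if_neg, if_neg]
        · simp
        all_goals simp only [Fin.val_succ]; omega
    rw [h0, h1]
    simp [gM, gE, add_comm 1 s]
    ring
  · intro i _
    simp only [gM, of_apply, gE]
    rw [if_neg, if_neg, if_neg]
    · simp
    all_goals simp only [Fin.val_succ, Fin.val_zero]; omega

lemma gM_step (a : ℂ) (b : ℕ → ℂ) (n : ℕ) : ∀ s, (gM a b (n+1) s).det =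
    (star a * a) * (gM a b n (s+1)).det +
      ∏ j ∈ Finset.range (n+1), (star (b (j+s)) * b (j+s)) := by
  induction n with
  | zero => intro s; simp [gM, gE]
  | succ n ih =>
    intro s
    rw [gM_rec, Finset.prod_range_succ']
    have h := ih (s+1)
    have e : ∏ k ∈ Finset.range (n + 1), star (b (k + 1 + s)) * b (k + 1 + s) =
      ∏ k ∈ Finset.range (n + 1), star (b (k + (s + 1))) * b (k + (s + 1)) := by
      refine Finset.prod_congr rfl fun k _ => ?_
      rw [show k + 1 + s = k + (s + 1) by ring]
    rw [e, show s + 1 + 1 = s + 2 from rfl] at *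
    rw [zero_add]
    linear_combination (star (b s) * b s) * h

lemma gM_det (a : ℂ) (b : ℕ → ℂ) (n : ℕ) : ∀ s, (gM a b n s).det =
    ∑ k ∈ Finset.range (n+1), (star a * a)^k *
      ∏ j ∈ Finset.Ico k n, (star (b (j+s)) * b (j+s)) := by
  induction n with
  | zero => intro s; simp [gM]
  | succ n ih =>
    intro s
    rw [gM_step, ih, Finset.sum_range_succ' _ (n+1), Finset.mul_sum]
    congr 1
    · refine Finset.sum_congr rfl fun k _ => ?_
      rw [← Finset.prod_Ico_add' (fun j => star (b (j+s)) * b (j+s)) k n 1, pow_succ']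
      rw [mul_assoc (star a * a) ((star a * a) ^ k)]
      congr 2
      refine Finset.prod_congr rfl fun k _ => ?_
      rw [show k + 1 + s = k + (s + 1) by ring]
    · simp

lemma star_mul_norm (z : ℂ) : star z * z = ((‖z‖ ^ 2 : ℝ) : ℂ) := by
  simpa using Complex.conj_mul' z

/-- For the successive-relaying channel matrix `H`, the Gram
determinant satisfies `det(HᴴH) = ∑_{k=0}^{L} |a|^{2k} ∏_{j=k+1}^{L} |bⱼ|²`
(with `b` zero-indexed in Lean, the product over math indices `j = k+1, …, L`
is over Lean indices `j` with `k ≤ j`); in particular, if `a ≠ 0` then `H` has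
full column rank `L`. -/
theorem stmt5 (L : ℕ) (hL : 1 ≤ L) (a : ℂ) (b : Fin L → ℂ)
    (H : Matrix (Fin (L + 1)) (Fin L) ℂ)
    (hH : ∀ i j, H i j =
      if (i : ℕ) = (j : ℕ) then a else if (i : ℕ) = (j : ℕ) + 1 then b j else 0) :
    (H.conjTranspose * H).det =
      ((∑ k ∈ Finset.range (L + 1), (‖a‖ ^ 2) ^ k *
          ∏ j ∈ Finset.univ.filter (fun j : Fin L => k ≤ (j : ℕ)), ‖b j‖ ^ 2 : ℝ) : ℂ) ∧
    (a ≠ 0 → (‖a‖ ^ 2) ^ L ≤ ((H.conjTranspose * H).det).re ∧ H.rank = L) := by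
  have key : (H.conjTranspose * H).det =
      ((∑ k ∈ Finset.range (L + 1), (‖a‖ ^ 2) ^ k *
          ∏ j ∈ Finset.univ.filter (fun j : Fin L => k ≤ (j : ℕ)), ‖b j‖ ^ 2 : ℝ) : ℂ) := by
    set b' : ℕ → ℂ := fun j => if h : j < L then b ⟨j, h⟩ else 0 with hb'
    have hb : ∀ j : Fin L, b' j = b j := by intro j; simp [hb']
    have hG : H.conjTranspose * H = gM a b' L 0 := by
      ext i j
      have hs : ∀ x : Fin (L+1), H x j = (if x = j.castSucc then a else 0) +
          (if x = j.succ then b j else 0) := by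
        intro x
        rw [hH]
        simp only [Fin.ext_iff, Fin.val_castSucc, Fin.val_succ]
        split_ifs <;> first | omega | simp
      simp only [Matrix.mul_apply, hs, mul_add, Finset.sum_add_distrib, mul_ite, mul_zero,
        Finset.sum_ite_eq', Finset.mem_univ, if_true, conjTranspose_apply, hH, gM, of_apply, gE,
        Fin.val_castSucc, Fin.val_succ, add_zero, hb]
      by_cases h1 : i = j
      · subst h1; simp
      · have h1' : (i : ℕ) ≠ j := fun h => h1 (Fin.ext h)
        split_ifs <;> first | omega | simp
    rw [hG, gM_det, Complex.ofReal_sum]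
    refine Finset.sum_congr rfl fun k _ => ?_
    rw [Complex.ofReal_mul, Complex.ofReal_pow, ← star_mul_norm, Complex.ofReal_prod]
    congr 1
    symm
    refine Finset.prod_bij (fun j _ => (j : ℕ)) ?_ ?_ ?_ ?_
    · intro j hj; simp at hj ⊢; exact hj
    · intro x _ y _ h; exact Fin.ext h
    · intro j hj
      simp at hj
      exact ⟨⟨j, hj.2⟩, by simpa using hj.1, rfl⟩
    · intro j _
      rw [add_zero, hb, star_mul_norm]
  refine ⟨key, fun ha => ?_⟩
  have hle : (‖a‖ ^ 2) ^ L ≤ ((H.conjTranspose * H).det).re := by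
    rw [key, Complex.ofReal_re, Finset.sum_range_succ]
    have h1 : Finset.univ.filter (fun j : Fin L => L ≤ (j : ℕ)) = ∅ := by
      ext j; simp
    rw [h1, Finset.prod_empty, mul_one]
    have : 0 ≤ ∑ k ∈ Finset.range L, (‖a‖ ^ 2) ^ k *
          ∏ j ∈ Finset.univ.filter (fun j : Fin L => k ≤ (j : ℕ)), ‖b j‖ ^ 2 :=
      Finset.sum_nonneg fun k _ => mul_nonneg (by positivity)
        (Finset.prod_nonneg fun j _ => by positivity)
    linarith
  refine ⟨hle, ?_⟩
  have hpos : 0 < (‖a‖ ^ 2) ^ L := by positivity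
  open scoped ComplexOrder in
  rw [← Matrix.rank_conjTranspose_mul_self, Matrix.rank_of_isUnit, Fintype.card_fin]
  rw [Matrix.isUnit_iff_isUnit_det, isUnit_iff_ne_zero]
  intro h
  rw [h, Complex.zero_re] at hle
  linarith
end

section
/- Fix an integer m ≥ 1 and reals v₀, v₁, …, v_m ≥ 0, and set v = max{v₁, …, v_m}. For ρ > 1 let H(ρ) be the (m+1)×m matrix with H(ρ)_{k,k} = ρ^{−v₀/2} for 1 ≤ k ≤ m, H(ρ)_{k+1,k} = ρ^{−v_k/2} for 1 ≤ k ≤ m, and all other entries zero. Then liminf_{ρ→∞} log det(I_{m+1} + (ρ/2) H(ρ) H(ρ)ᴴ) / log ρ ≥ max{m(1 − v₀), m(1 − v), 0}. -/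
open Matrix Filter

open scoped ComplexOrder in
lemma aux_scalar {n : ℕ} (Y : Matrix (Fin n) (Fin n) ℂ) (hY : Y.PosSemidef) (c : ℝ) (hc : 0 ≤ c) :
    ∃ d : ℝ, c ^ n ≤ d ∧ ((c : ℂ) • (1 : Matrix (Fin n) (Fin n) ℂ) + Y).det = (d : ℂ) := by
  have h1 := Matrix.eval_charpoly Y (-(c : ℂ))
  rw [hY.1.charpoly_eq, Polynomial.eval_prod] at h1
  have h2 : (Matrix.scalar (Fin n) (-(c : ℂ)) - Y) = -((c : ℂ) • (1 : Matrix (Fin n) (Fin n) ℂ) + Y) := by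
    rw [Matrix.scalar_apply, ← Matrix.smul_one_eq_diagonal, neg_smul, neg_add, sub_eq_add_neg]
  rw [h2, Matrix.det_neg] at h1
  refine ⟨∏ i, (c + hY.1.eigenvalues i), ?_, ?_⟩
  · have : c ^ n = ∏ _i : Fin n, c := by simp
    rw [this]
    exact Finset.prod_le_prod (fun _ _ => hc) (fun i _ => by linarith [hY.eigenvalues_nonneg i])
  · have h3 : ∏ i, (Polynomial.eval (-(c : ℂ)) (Polynomial.X - Polynomial.C ((hY.1.eigenvalues i : ℝ) : ℂ)))
        = (-1) ^ n * ∏ i, ((c : ℂ) + (hY.1.eigenvalues i : ℝ)) := by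
      have : ((-1 : ℂ)) ^ n = ∏ _i : Fin n, (-1 : ℂ) := by simp
      rw [this, ← Finset.prod_mul_distrib]
      refine Finset.prod_congr rfl fun i _ => ?_
      simp
      ring
    have h4 := h3.symm.trans h1
    rw [Fintype.card_fin] at h4
    have h5 := mul_left_cancel₀ (pow_ne_zero n (by norm_num : (-1 : ℂ) ≠ 0)) h4
    rw [← h5]
    push_cast
    rfl

open scoped ComplexOrder in
lemma aux_det {n : ℕ} (A X : Matrix (Fin n) (Fin n) ℂ) (hA : A.det ≠ 0) (hX : X.PosSemidef)
    (c : ℝ) (hc : 0 ≤ c) :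
    c ^ n * ‖A.det‖ ^ 2 ≤ ((c : ℂ) • (Aᴴ * A) + X).det.re := by
  have hu : IsUnit A.det := isUnit_iff_ne_zero.mpr hA
  have hu' : IsUnit Aᴴ.det := by rw [det_conjTranspose]; exact hu.star
  obtain ⟨d, hd, hd2⟩ := aux_scalar ((A⁻¹)ᴴ * X * A⁻¹) (hX.conjTranspose_mul_mul_same _) c hc
  have key : (c : ℂ) • (Aᴴ * A) + X
      = Aᴴ * ((c : ℂ) • (1 : Matrix (Fin n) (Fin n) ℂ) + (A⁻¹)ᴴ * X * A⁻¹) * A := by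
    rw [conjTranspose_nonsing_inv, Matrix.mul_add, Matrix.add_mul]
    congr 1
    · simp
    · rw [Matrix.mul_assoc (Aᴴ⁻¹), Matrix.mul_nonsing_inv_cancel_left _ _ hu', Matrix.mul_assoc,
        Matrix.nonsing_inv_mul _ hu, Matrix.mul_one]
  rw [key, det_mul, det_mul, hd2, det_conjTranspose]
  have : star A.det * (d : ℂ) * A.det = ((d * ‖A.det‖ ^ 2 : ℝ) : ℂ) := by
    push_cast
    rw [← Complex.conj_mul' A.det]
    simp only [Complex.star_def]
    ring
  rw [this, Complex.ofReal_re]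
  exact mul_le_mul_of_nonneg_right hd (by positivity)

open scoped ComplexOrder in
lemma aux_row {m : ℕ} (H : Matrix (Fin (m + 1)) (Fin m) ℂ) (p : Fin (m + 1))
    (hA : (H.submatrix p.succAbove id).det ≠ 0) (c : ℝ) (hc : 0 ≤ c) :
    c ^ m * ‖(H.submatrix p.succAbove id).det‖ ^ 2 ≤ (1 + (c : ℂ) • (H * Hᴴ)).det.re := by
  set A := H.submatrix p.succAbove id with hAdef
  set R : Matrix Unit (Fin m) ℂ := H.submatrix (fun _ => p) id with hR
  have h1 : Hᴴ * H = Aᴴ * A + Rᴴ * R := by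
    ext i j
    simp only [Matrix.mul_apply, Matrix.add_apply, Matrix.conjTranspose_apply]
    rw [Fin.sum_univ_succAbove _ p, add_comm]
    simp [hAdef, hR]
  have hc' : (0 : ℂ) ≤ (c : ℂ) := by exact_mod_cast hc
  rw [← Matrix.smul_mul, det_one_add_mul_comm, Matrix.mul_smul, h1, smul_add]
  have := aux_det A (1 + (c : ℂ) • (Rᴴ * R)) hA
    (PosSemidef.one.add ((posSemidef_conjTranspose_mul_self R).smul hc')) c hc
  convert this using 3
  abel

open scoped ComplexOrder in
lemma aux_one {m : ℕ} (H : Matrix (Fin (m + 1)) (Fin m) ℂ) (c : ℝ) (hc : 0 ≤ c) :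
    1 ≤ (1 + (c : ℂ) • (H * Hᴴ)).det.re := by
  have hc' : (0 : ℂ) ≤ (c : ℂ) := by exact_mod_cast hc
  have := aux_det (1 : Matrix (Fin (m + 1)) (Fin (m + 1)) ℂ) ((c : ℂ) • (H * Hᴴ)) (by simp)
    ((posSemidef_self_mul_conjTranspose H).smul hc') 1 zero_le_one
  simpa using this

lemma aux_upper {m : ℕ} (H : Matrix (Fin (m + 1)) (Fin m) ℂ) (hH : ∀ i j, ‖H i j‖ ≤ 1)
    (ρ : ℝ) (hρ : 1 < ρ) :
    (1 + ((ρ / 2 : ℝ) : ℂ) • (H * Hᴴ)).det.re ≤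
      (Nat.factorial (m + 1) : ℝ) * ((1 + m) * ρ) ^ (m + 1) := by
  have h := Matrix.det_le (A := 1 + ((ρ / 2 : ℝ) : ℂ) • (H * Hᴴ))
    (abv := IsAbsoluteValue.toAbsoluteValue (norm : ℂ → ℝ)) (x := (1 + m) * ρ) (by
      intro i j
      change ‖(1 + ((ρ / 2 : ℝ) : ℂ) • (H * Hᴴ) : Matrix (Fin (m + 1)) (Fin (m + 1)) ℂ) i j‖ ≤ _
      rw [Matrix.add_apply, Matrix.smul_apply, Matrix.mul_apply]
      have e1 : ‖(1 : Matrix (Fin (m + 1)) (Fin (m + 1)) ℂ) i j‖ ≤ 1 := by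
        rw [Matrix.one_apply]; split_ifs <;> simp
      have e2 : ‖∑ k, H i k * Hᴴ k j‖ ≤ m := by
        refine (norm_sum_le _ _).trans ?_
        have : ∑ k : Fin m, ‖H i k * Hᴴ k j‖ ≤ ∑ k : Fin m, (1 : ℝ) := by
          refine Finset.sum_le_sum fun k _ => ?_
          rw [norm_mul, conjTranspose_apply, norm_star]
          exact mul_le_one₀ (hH _ _) (norm_nonneg _) (hH _ _)
        simpa using this
      refine (norm_add_le _ _).trans ?_
      rw [norm_smul, Complex.norm_real, Real.norm_eq_abs, abs_of_pos (by linarith)]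
      have hm0 : (0 : ℝ) ≤ m := Nat.cast_nonneg m
      have : ρ / 2 * ‖∑ k, H i k * Hᴴ k j‖ ≤ ρ / 2 * m :=
        mul_le_mul_of_nonneg_left e2 (by linarith)
      nlinarith)
  rw [Fintype.card_fin, nsmul_eq_mul] at h
  exact (Complex.re_le_norm _).trans h

lemma aux_lim (f : ℝ → ℝ) (a b : ℝ) (hf : IsBoundedUnder (· ≤ ·) atTop f)
    (h : ∀ᶠ ρ in atTop, a - b / Real.log ρ ≤ f ρ) : a ≤ liminf f atTop := by
  have ht : Tendsto (fun ρ : ℝ => a - b / Real.log ρ) atTop (nhds a) := by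
    simpa using (tendsto_const_nhds (x := a)).sub (Real.tendsto_log_atTop.const_div_atTop b)
  rw [← ht.liminf_eq]
  exact liminf_le_liminf h ht.isBoundedUnder_ge hf.isCoboundedUnder_ge

lemma aux_low (m : ℕ) (D ρ w : ℝ) (hρ : 1 < ρ)
    (h : (ρ / 2) ^ m * (ρ ^ (-w)) ^ m ≤ D) :
    m * (1 - w) - m * Real.log 2 / Real.log ρ ≤ Real.log D / Real.log ρ := by
  have h0 : 0 < ρ := by linarith
  have hl := Real.log_pos hρ
  have h2 := Real.log_le_log (by positivity) h
  rw [Real.log_mul (by positivity) (by positivity), Real.log_pow, Real.log_pow,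
    Real.log_div (by positivity) (by norm_num), Real.log_rpow h0] at h2
  rw [le_div_iff₀ hl]
  have : ((m : ℝ) * (1 - w) - m * Real.log 2 / Real.log ρ) * Real.log ρ
      = m * (1 - w) * Real.log ρ - m * Real.log 2 := by field_simp
  rw [this]
  linarith

lemma aux_sq (ρ w : ℝ) (h0 : 0 < ρ) : ‖((ρ ^ (-(w / 2)) : ℝ) : ℂ)‖ ^ 2 = ρ ^ (-w) := by
  rw [Complex.norm_real, Real.norm_eq_abs, sq_abs, ← Real.rpow_natCast, ← Real.rpow_mul h0.le]
  congr 1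
  push_cast
  ring

/-- With `H(ρ)` the `(m+1) × m` successive-relaying channel matrix
whose diagonal entries are `ρ^{−v₀/2}` and subdiagonal entries `ρ^{−v_k/2}`,
and `V = max{v₁,…,v_m}`,
`liminf_{ρ→∞} log det(I + (ρ/2) H(ρ) H(ρ)ᴴ) / log ρ ≥ max{m(1−v₀), m(1−V), 0}`. -/
theorem stmt10 (m : ℕ) (hm : 1 ≤ m) (v₀ : ℝ) (hv₀ : 0 ≤ v₀)
    (v : Fin m → ℝ) (hv : ∀ k, 0 ≤ v k) (V : ℝ) (hV : IsGreatest (Set.range v) V)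
    (H : ℝ → Matrix (Fin (m + 1)) (Fin m) ℂ)
    (hH : ∀ ρ : ℝ, 1 < ρ → ∀ i j, H ρ i j =
      if (i : ℕ) = (j : ℕ) then ((ρ ^ (-(v₀ / 2)) : ℝ) : ℂ)
      else if (i : ℕ) = (j : ℕ) + 1 then ((ρ ^ (-(v j / 2)) : ℝ) : ℂ) else 0) :
    max (max ((m : ℝ) * (1 - v₀)) ((m : ℝ) * (1 - V))) 0 ≤
      Filter.liminf (fun ρ : ℝ =>
          Real.log (((1 + ((ρ / 2 : ℝ) : ℂ) •
              (H ρ * (H ρ).conjTranspose)).det).re) / Real.log ρ)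
        Filter.atTop := by
  have hle : ∀ k, v k ≤ V := fun k => hV.2 ⟨k, rfl⟩
  -- triangular determinants
  have d1 : ∀ ρ : ℝ, 1 < ρ → ((H ρ).submatrix (Fin.last m).succAbove id).det
      = ∏ _k : Fin m, ((ρ ^ (-(v₀ / 2)) : ℝ) : ℂ) := by
    intro ρ hρ
    rw [Matrix.det_of_lowerTriangular]
    · refine Finset.prod_congr rfl fun i _ => ?_
      simp [hH ρ hρ]
    · intro i j hij
      have hij' : (i : ℕ) < j := hij
      simp only [Matrix.submatrix_apply, hH ρ hρ, Fin.succAbove_last, Fin.val_castSucc, id]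
      rw [if_neg (by omega), if_neg (by omega)]
  have d2 : ∀ ρ : ℝ, 1 < ρ → ((H ρ).submatrix (0 : Fin (m + 1)).succAbove id).det
      = ∏ k : Fin m, ((ρ ^ (-(v k / 2)) : ℝ) : ℂ) := by
    intro ρ hρ
    rw [Matrix.det_of_upperTriangular]
    · refine Finset.prod_congr rfl fun i _ => ?_
      simp [hH ρ hρ]
    · intro i j hij
      have hij' : (j : ℕ) < i := hij
      simp only [Matrix.submatrix_apply, hH ρ hρ, Fin.succAbove_zero, Fin.val_succ, id]
      rw [if_neg (by omega), if_neg (by omega)]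
  have hbd : IsBoundedUnder (· ≤ ·) atTop (fun ρ : ℝ =>
      Real.log (((1 + ((ρ / 2 : ℝ) : ℂ) • (H ρ * (H ρ).conjTranspose)).det).re) / Real.log ρ) := by
    set C : ℝ := (Nat.factorial (m + 1) : ℝ) * (1 + m) ^ (m + 1) with hC
    have hCpos : 0 < C := by positivity
    refine ⟨|Real.log C| + (m + 1), ?_⟩
    rw [eventually_map]
    filter_upwards [eventually_gt_atTop 1, Real.tendsto_log_atTop.eventually_ge_atTop 1]
      with ρ hρ hl
    have h0 : 0 < ρ := by linarith
    have hn : ∀ w : ℝ, 0 ≤ w → ‖((ρ ^ (-(w / 2)) : ℝ) : ℂ)‖ ≤ 1 := by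
      intro w hw
      rw [Complex.norm_real, Real.norm_eq_abs, abs_of_pos (by positivity)]
      exact Real.rpow_le_one_of_one_le_of_nonpos hρ.le (by linarith)
    have hu := aux_upper (H ρ) (by
      intro i j
      rw [hH ρ hρ]
      split_ifs
      · exact hn _ hv₀
      · exact hn _ (hv j)
      · simp) ρ hρ
    have h1 := aux_one (H ρ) (ρ / 2) (by linarith)
    have h2 := Real.log_le_log (by linarith) hu
    have h3 : (Nat.factorial (m + 1) : ℝ) * ((1 + m) * ρ) ^ (m + 1) = C * ρ ^ (m + 1) := by
      rw [hC, mul_pow]; ring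
    rw [h3, Real.log_mul (by positivity) (by positivity), Real.log_pow] at h2
    rw [div_le_iff₀ (by linarith)]
    push_cast at h2
    have h4 := le_abs_self (Real.log C)
    have h5 := abs_nonneg (Real.log C)
    push_cast
    nlinarith
  refine max_le (max_le ?_ ?_) ?_
  · refine aux_lim _ _ (m * Real.log 2) hbd ?_
    filter_upwards [eventually_gt_atTop 1] with ρ hρ
    have h0 : 0 < ρ := by linarith
    refine aux_low m _ ρ v₀ hρ ?_
    have := aux_row (H ρ) (Fin.last m) (by
      rw [d1 ρ hρ, Finset.prod_ne_zero_iff]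
      intro k _
      exact_mod_cast (Real.rpow_pos_of_pos h0 _).ne') (ρ / 2) (by linarith)
    rw [d1 ρ hρ, norm_prod, ← Finset.prod_pow] at this
    simp only [aux_sq ρ _ h0] at this
    simpa using this
  · refine aux_lim _ _ (m * Real.log 2) hbd ?_
    filter_upwards [eventually_gt_atTop 1] with ρ hρ
    have h0 : 0 < ρ := by linarith
    refine aux_low m _ ρ V hρ ?_
    have := aux_row (H ρ) 0 (by
      rw [d2 ρ hρ, Finset.prod_ne_zero_iff]
      intro k _
      exact_mod_cast (Real.rpow_pos_of_pos h0 _).ne') (ρ / 2) (by linarith)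
    rw [d2 ρ hρ, norm_prod, ← Finset.prod_pow] at this
    simp only [aux_sq ρ _ h0] at this
    refine le_trans (mul_le_mul_of_nonneg_left ?_ (by positivity)) this
    have e : (ρ ^ (-V)) ^ m = ∏ _k : Fin m, ρ ^ (-V) := by simp
    rw [e]
    exact Finset.prod_le_prod (fun _ _ => by positivity)
      (fun k _ => Real.rpow_le_rpow_of_exponent_le hρ.le (by linarith [hle k]))
  · refine aux_lim _ _ 0 hbd ?_
    filter_upwards [eventually_gt_atTop 1] with ρ hρ
    simp only [zero_div, sub_zero]
    exact div_nonneg (Real.log_nonneg (aux_one (H ρ) (ρ / 2) (by linarith))) (Real.log_pos hρ).le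
end

section
/- Let X₀ and X₁ be independent random variables, each exponentially distributed with rate 1 (the squared magnitudes of the direct-link and relay-link Rayleigh fading coefficients). Fix an integer L ≥ 1 and a real r with 0 < r < L/(L+1), and let P_out(ρ) = P( log₂(1 + ρ(X₀ + X₁)) < ((L+1)/L)·r·log₂ ρ ). Then lim_{ρ→∞} −log P_out(ρ)/log ρ = 2(1 − ((L+1)/L)·r). That is, conditioned on correct decoding at the relays, the successive relaying scheme achieves the diversity–multiplexing tradeoff d(r) = 2(1 − ((L+1)/L) r)⁺. -/
open Filter MeasureTheory ProbabilityTheory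

lemma aux_cdf {Ω : Type*} [MeasurableSpace Ω] (μ : Measure Ω)
    [IsProbabilityMeasure μ] (X : Ω → ℝ) (hm : Measurable X)
    (h : Measure.map X μ = expMeasure 1) (t : ℝ) (ht : 0 ≤ t) :
    μ.real {ω | X ω ≤ t} = 1 - Real.exp (-t) := by
  have := isProbabilityMeasure_expMeasure (r := 1) one_pos
  have h2 := cdf_expMeasure_eq (r := 1) one_pos t
  rw [cdf_eq_real, ← h, map_measureReal_apply hm measurableSet_Iic, if_pos ht, one_mul] at h2
  exact h2

lemma aux_pos {Ω : Type*} [MeasurableSpace Ω] (μ : Measure Ω)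
    [IsProbabilityMeasure μ] (X : Ω → ℝ) (hm : Measurable X)
    (h : Measure.map X μ = expMeasure 1) : ∀ᵐ ω ∂μ, 0 < X ω := by
  have h2 := aux_cdf μ X hm h 0 le_rfl
  simp only [neg_zero, Real.exp_zero, sub_self] at h2
  rw [ae_iff]
  simp only [not_lt]
  exact (measureReal_eq_zero_iff).1 h2

lemma aux_prod_s11 {Ω : Type*} [MeasurableSpace Ω] (μ : Measure Ω)
    [IsProbabilityMeasure μ] (X₀ X₁ : Ω → ℝ)
    (hm0 : Measurable X₀) (hm1 : Measurable X₁)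
    (h0 : Measure.map X₀ μ = expMeasure 1)
    (h1 : Measure.map X₁ μ = expMeasure 1)
    (hindep : IndepFun X₀ X₁ μ) (t : ℝ) (ht : 0 ≤ t) :
    μ.real {ω | X₀ ω ≤ t ∧ X₁ ω ≤ t} = (1 - Real.exp (-t)) ^ 2 := by
  have h2 := hindep.measure_inter_preimage_eq_mul (Set.Iic t) (Set.Iic t)
    measurableSet_Iic measurableSet_Iic
  have h3 := congrArg ENNReal.toReal h2
  rw [ENNReal.toReal_mul] at h3
  have e0 := aux_cdf μ X₀ hm0 h0 t ht
  have e1 := aux_cdf μ X₁ hm1 h1 t ht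
  rw [sq]
  nth_rewrite 1 [← e0]
  rw [← e1]
  exact h3

lemma aux_bounds {Ω : Type*} [MeasurableSpace Ω] (μ : Measure Ω)
    [IsProbabilityMeasure μ] (X₀ X₁ : Ω → ℝ)
    (hm0 : Measurable X₀) (hm1 : Measurable X₁)
    (h0 : Measure.map X₀ μ = expMeasure 1)
    (h1 : Measure.map X₁ μ = expMeasure 1)
    (hindep : IndepFun X₀ X₁ μ) (s ρ : ℝ) (hs : s < 1) (hρ : 1 < ρ) (h2 : 2 ≤ ρ ^ s) :
    (ρ ^ (s - 1) / 12) ^ 2 ≤ (μ {ω | Real.logb 2 (1 + ρ * (X₀ ω + X₁ ω)) <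
            s * Real.logb 2 ρ}).toReal ∧
    (μ {ω | Real.logb 2 (1 + ρ * (X₀ ω + X₁ ω)) <
            s * Real.logb 2 ρ}).toReal ≤ (ρ ^ (s - 1)) ^ 2 := by
  have hρ0 : 0 < ρ := by linarith
  have p0 := aux_pos μ X₀ hm0 h0
  have p1 := aux_pos μ X₁ hm1 h1
  have key : ∀ S : ℝ, 0 < S → (Real.logb 2 (1 + ρ * S) < s * Real.logb 2 ρ ↔
      1 + ρ * S < ρ ^ s) := by
    intro S hS
    rw [← Real.logb_rpow_eq_mul_logb_of_pos hρ0]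
    exact Real.logb_lt_logb_iff (by norm_num) (by positivity) (by positivity)
  set u := ρ ^ (s - 1) with hu
  have hu0 : 0 < u := by positivity
  have hus : ρ ^ s = ρ * u := by
    rw [hu, Real.rpow_sub_one hρ0.ne']; field_simp
  have hu1 : u ≤ 1 := Real.rpow_le_one_of_one_le_of_nonpos hρ.le (by linarith)
  rw [hus] at h2
  constructor
  · have hA := aux_prod_s11 μ X₀ X₁ hm0 hm1 h0 h1 hindep (u/6) (by positivity)
    have hle : u / 12 ≤ 1 - Real.exp (-(u/6)) := by
      have e1 : Real.exp (-(u/6)) ≤ 1 / (1 + u/6) := by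
        rw [Real.exp_neg, ← one_div]
        apply one_div_le_one_div_of_le (by positivity)
        linarith [Real.add_one_le_exp (u/6)]
      have e2 : 1 / (1 + u/6) ≤ 1 - u / 12 := by
        rw [div_le_iff₀ (by positivity)]; nlinarith
      linarith
    calc (u/12)^2 ≤ (1 - Real.exp (-(u/6)))^2 := by gcongr
      _ = _ := hA.symm
      _ ≤ _ := by
        apply ENNReal.toReal_mono (measure_ne_top _ _)
        apply measure_mono_ae
        filter_upwards [p0, p1] with ω q0 q1 hω
        obtain ⟨a, b⟩ := hω
        refine (key _ (by linarith)).2 ?_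
        rw [hus]
        have : ρ * (X₀ ω + X₁ ω) ≤ ρ * (u / 3) := by
          apply mul_le_mul_of_nonneg_left _ hρ0.le
          linarith
        linarith
  · have hA := aux_prod_s11 μ X₀ X₁ hm0 hm1 h0 h1 hindep u hu0.le
    have hB : 0 ≤ 1 - Real.exp (-u) := by
      have := Real.exp_le_one_iff.2 (by linarith : -u ≤ 0); linarith
    calc _ ≤ μ.real {ω | X₀ ω ≤ u ∧ X₁ ω ≤ u} := by
          apply ENNReal.toReal_mono (measure_ne_top _ _)
          apply measure_mono_ae
          filter_upwards [p0, p1] with ω q0 q1 hω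
          have h3 := (key _ (by linarith)).1 hω
          rw [hus] at h3
          have h4 : X₀ ω + X₁ ω < u := lt_of_mul_lt_mul_left (by linarith) hρ0.le
          exact ⟨by linarith, by linarith⟩
      _ = _ := hA
      _ ≤ u ^ 2 := by
        gcongr
        linarith [Real.add_one_le_exp (-u)]

/-- If `X₀, X₁` are independent rate-1 exponential random
variables, `L ≥ 1` and `0 < r < L/(L+1)`, then the outage probability
`P_out(ρ) = P(log₂(1 + ρ(X₀+X₁)) < ((L+1)/L) r log₂ ρ)` satisfies
`−log P_out(ρ)/log ρ → 2(1 − ((L+1)/L) r)` as `ρ → ∞`: the successive relaying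
scheme achieves the diversity–multiplexing tradeoff `d(r) = 2(1−((L+1)/L)r)⁺`. -/
theorem stmt11 {Ω : Type*} [MeasurableSpace Ω] (μ : Measure Ω)
    [IsProbabilityMeasure μ] (X₀ X₁ : Ω → ℝ)
    (hm0 : Measurable X₀) (hm1 : Measurable X₁)
    (h0 : Measure.map X₀ μ = expMeasure 1)
    (h1 : Measure.map X₁ μ = expMeasure 1)
    (hindep : IndepFun X₀ X₁ μ)
    (L : ℕ) (hL : 1 ≤ L) (r : ℝ) (hr : 0 < r) (hrL : r < (L : ℝ) / (L + 1)) :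
    Tendsto (fun ρ : ℝ =>
        -Real.log ((μ {ω | Real.logb 2 (1 + ρ * (X₀ ω + X₁ ω)) <
            ((L : ℝ) + 1) / (L : ℝ) * r * Real.logb 2 ρ}).toReal) / Real.log ρ)
      atTop (nhds (2 * (1 - ((L : ℝ) + 1) / (L : ℝ) * r))) := by
  have hL0 : (0 : ℝ) < L := by exact_mod_cast hL
  have hs0 : 0 < ((L : ℝ) + 1) / (L : ℝ) * r := by positivity
  have hs1 : ((L : ℝ) + 1) / (L : ℝ) * r < 1 := by
    rw [lt_div_iff₀ (by positivity)] at hrL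
    rw [div_mul_eq_mul_div, div_lt_one hL0]
    linarith
  generalize ((L : ℝ) + 1) / (L : ℝ) * r = s at hs0 hs1 ⊢
  have hlim : Tendsto (fun ρ : ℝ => 2 * (1 - s) + 2 * Real.log 12 / Real.log ρ) atTop
      (nhds (2 * (1 - s))) := by
    have := (Real.tendsto_log_atTop.const_div_atTop (2 * Real.log 12)).const_add (2 * (1 - s))
    simpa using this
  have hev : ∀ᶠ ρ : ℝ in atTop, 1 < ρ ∧ 2 ≤ ρ ^ s :=
    (eventually_gt_atTop 1).and ((tendsto_rpow_atTop hs0).eventually_ge_atTop 2)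
  refine tendsto_of_tendsto_of_tendsto_of_le_of_le' tendsto_const_nhds hlim ?_ ?_
  · filter_upwards [hev] with ρ ⟨hρ, h2⟩
    obtain ⟨a, b⟩ := aux_bounds μ X₀ X₁ hm0 hm1 h0 h1 hindep s ρ hs1 hρ h2
    have hρ0 : 0 < ρ := by linarith
    have hl := Real.log_pos hρ
    have hc := Real.log_le_log (lt_of_lt_of_le (by positivity) a) b
    rw [Real.log_pow, Real.log_rpow hρ0] at hc
    rw [le_div_iff₀ hl]
    push_cast at hc
    linarith
  · filter_upwards [hev] with ρ ⟨hρ, h2⟩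
    obtain ⟨a, b⟩ := aux_bounds μ X₀ X₁ hm0 hm1 h0 h1 hindep s ρ hs1 hρ h2
    have hρ0 : 0 < ρ := by linarith
    have hl := Real.log_pos hρ
    have hc := Real.log_le_log (by positivity) a
    rw [Real.log_pow, Real.log_div (by positivity) (by norm_num), Real.log_rpow hρ0] at hc
    rw [div_le_iff₀ hl, add_mul, div_mul_cancel₀ _ hl.ne']
    push_cast at hc
    linarith
end

section
/- Let X₀ and X₁ be independent random variables, each exponentially distributed with rate 1, and fix a real t > 0. Then lim_{ρ→∞} −log P(X₀ + X₁ ≤ t/ρ) / log ρ = 2. That is, at any fixed target rate the outage probability of a codeword received over the direct link plus one relayed link decays like ρ^{−2}: the successive relaying scheme has maximal diversity gain 2. -/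
open Filter MeasureTheory ProbabilityTheory

lemma exp_cdf_aux {Ω : Type*} [MeasurableSpace Ω] (μ : Measure Ω)
    [IsProbabilityMeasure μ] (X : Ω → ℝ) (hm : Measurable X)
    (h : Measure.map X μ = expMeasure 1) (x : ℝ) (hx : 0 ≤ x) :
    μ.real (X ⁻¹' Set.Iic x) = 1 - Real.exp (-x) := by
  have := isProbabilityMeasure_expMeasure (r := 1) one_pos
  have h1 : μ.real (X ⁻¹' Set.Iic x) = (expMeasure 1).real (Set.Iic x) := by
    rw [← h, map_measureReal_apply hm measurableSet_Iic]
  rw [h1, ← cdf_eq_real, cdf_expMeasure_eq one_pos]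
  simp [hx]

lemma sum_bounds_aux {Ω : Type*} [MeasurableSpace Ω] (μ : Measure Ω)
    [IsProbabilityMeasure μ] (X₀ X₁ : Ω → ℝ)
    (hm0 : Measurable X₀) (hm1 : Measurable X₁)
    (h0 : Measure.map X₀ μ = expMeasure 1)
    (h1 : Measure.map X₁ μ = expMeasure 1)
    (hindep : IndepFun X₀ X₁ μ) (s : ℝ) (hs : 0 < s) (hs1 : s ≤ 1) :
    (s / 4) ^ 2 ≤ μ.real {ω | X₀ ω + X₁ ω ≤ s} ∧
      μ.real {ω | X₀ ω + X₁ ω ≤ s} ≤ s ^ 2 := by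
  have key : ∀ x : ℝ, 0 ≤ x →
      μ.real (X₀ ⁻¹' Set.Iic x ∩ X₁ ⁻¹' Set.Iic x) = (1 - Real.exp (-x)) ^ 2 := by
    intro x hx
    have := hindep.measure_inter_preimage_eq_mul (Set.Iic x) (Set.Iic x)
      measurableSet_Iic measurableSet_Iic
    rw [measureReal_def, this, ENNReal.toReal_mul, ← measureReal_def, ← measureReal_def,
      exp_cdf_aux μ X₀ hm0 h0 x hx, exp_cdf_aux μ X₁ hm1 h1 x hx, sq]
  have hpos : ∀ X : Ω → ℝ, Measurable X → Measure.map X μ = expMeasure 1 →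
      ∀ᵐ ω ∂μ, 0 < X ω := by
    intro X hm h
    have := exp_cdf_aux μ X hm h 0 le_rfl
    simp only [neg_zero, Real.exp_zero, sub_self] at this
    rw [measureReal_eq_zero_iff] at this
    rw [ae_iff]
    convert this using 2
    ext ω
    simp
  constructor
  · calc (s / 4) ^ 2 ≤ (1 - Real.exp (-(s/2))) ^ 2 := by
          have h2 : Real.exp (-(s/2)) ≤ 1 - s/4 := by
            rw [Real.exp_neg]
            have := Real.add_one_le_exp (s/2)
            rw [inv_le_comm₀ (Real.exp_pos _) (by linarith)]
            refine le_trans ?_ this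
            rw [inv_le_iff_one_le_mul₀ (by linarith)]
            nlinarith
          apply pow_le_pow_left₀ (by positivity)
          linarith
      _ = _ := (key (s/2) (by positivity)).symm
      _ ≤ _ := by
          refine measureReal_mono ?_ (measure_ne_top _ _)
          rintro ω ⟨ha, hb⟩
          simp only [Set.mem_preimage, Set.mem_Iic] at ha hb
          simp only [Set.mem_ofPred_eq]
          linarith
  · calc _ ≤ μ.real (X₀ ⁻¹' Set.Iic s ∩ X₁ ⁻¹' Set.Iic s) := by
          rw [measureReal_def, measureReal_def]
          apply ENNReal.toReal_mono (measure_ne_top _ _)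
          apply measure_mono_ae
          filter_upwards [hpos X₀ hm0 h0, hpos X₁ hm1 h1] with ω ha hb hc
          have hc' : X₀ ω + X₁ ω ≤ s := hc
          exact ⟨show X₀ ω ≤ s by linarith, show X₁ ω ≤ s by linarith⟩
      _ = _ := key s hs.le
      _ ≤ _ := by
          have := Real.add_one_le_exp (-s)
          have h2 : Real.exp (-s) ≤ 1 := by simpa using hs.le
          apply pow_le_pow_left₀ <;> linarith

/-- If `X₀, X₁` are independent rate-1 exponential random
variables and `t > 0`, then `−log P(X₀ + X₁ ≤ t/ρ) / log ρ → 2` as `ρ → ∞`: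
the outage probability decays like `ρ^{−2}`, i.e. diversity gain 2. -/
theorem stmt12 {Ω : Type*} [MeasurableSpace Ω] (μ : Measure Ω)
    [IsProbabilityMeasure μ] (X₀ X₁ : Ω → ℝ)
    (hm0 : Measurable X₀) (hm1 : Measurable X₁)
    (h0 : Measure.map X₀ μ = expMeasure 1)
    (h1 : Measure.map X₁ μ = expMeasure 1)
    (hindep : IndepFun X₀ X₁ μ)
    (t : ℝ) (ht : 0 < t) :
    Tendsto (fun ρ : ℝ =>
        -Real.log ((μ {ω | X₀ ω + X₁ ω ≤ t / ρ}).toReal) / Real.log ρ)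
      atTop (nhds 2) := by
  have hlim : ∀ c : ℝ, Tendsto (fun ρ : ℝ => 2 + c / Real.log ρ) atTop (nhds 2) := by
    intro c
    simpa using (Real.tendsto_log_atTop.const_div_atTop c).const_add 2
  have hev : ∀ᶠ ρ : ℝ in atTop, 1 < ρ ∧ t ≤ ρ :=
    (eventually_gt_atTop 1).and (eventually_ge_atTop t)
  refine tendsto_of_tendsto_of_tendsto_of_le_of_le' (hlim (-2 * Real.log t))
    (hlim (2 * Real.log 4 - 2 * Real.log t)) ?_ ?_
  all_goals
    filter_upwards [hev] with ρ hρ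
    obtain ⟨hρ1, hρt⟩ := hρ
    have hρ0 : 0 < ρ := by linarith
    have hl : 0 < Real.log ρ := Real.log_pos hρ1
    have hs : 0 < t / ρ := by positivity
    obtain ⟨hb1, hb2⟩ := sum_bounds_aux μ X₀ X₁ hm0 hm1 h0 h1 hindep (t / ρ) hs
      ((div_le_one hρ0).2 hρt)
    rw [measureReal_def] at hb1 hb2
    have hp : 0 < (t / ρ / 4) ^ 2 := by positivity
    have hl1 := Real.log_le_log hp hb1
    have hl2 := Real.log_le_log (lt_of_lt_of_le hp hb1) hb2
    rw [Real.log_pow, Real.log_div hs.ne' (by norm_num), Real.log_div ht.ne' hρ0.ne'] at hl1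
    rw [Real.log_pow, Real.log_div ht.ne' hρ0.ne'] at hl2
    push_cast at hl1 hl2
  · rw [le_div_iff₀ hl, add_mul, div_mul_cancel₀ _ hl.ne']
    linarith
  · rw [div_le_iff₀ hl, add_mul, div_mul_cancel₀ _ hl.ne']
    linarith
end

section
/- If a ≠ 0, then lim_{ρ→∞} [ (1/(L+1)) · log₂ det(I_{L+1} + ρ H Hᴴ) ] / log₂ ρ = L/(L+1). That is, the successive relaying scheme under interference-free relaying achieves multiplexing gain L/(L+1), which tends to 1 as the frame length L grows. -/
open Matrix Filter

open ComplexOrder in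
theorem hdp_aux {m n : ℕ} (H : Matrix (Fin m) (Fin n) ℂ) (hinj : Function.Injective H.mulVec) :
    0 < ((H.conjTranspose * H).det).re :=
  (Complex.pos_iff.1 (Matrix.PosDef.conjTranspose_mul_self H hinj).det_pos).1

/-- For the successive-relaying channel matrix `H` with `a ≠ 0`,
the per-time-slot rate `(1/(L+1)) log₂ det(I + ρ H Hᴴ)` divided by `log₂ ρ`
tends to `L/(L+1)` as `ρ → ∞`: the scheme achieves multiplexing gain
`L/(L+1)`. -/
theorem stmt14 (L : ℕ) (hL : 1 ≤ L) (a : ℂ) (ha : a ≠ 0) (b : Fin L → ℂ)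
    (H : Matrix (Fin (L + 1)) (Fin L) ℂ)
    (hH : ∀ i j, H i j =
      if (i : ℕ) = (j : ℕ) then a else if (i : ℕ) = (j : ℕ) + 1 then b j else 0) :
    Tendsto (fun ρ : ℝ =>
        ((1 / ((L : ℝ) + 1)) *
            Real.logb 2 ((1 + (ρ : ℂ) • (H * H.conjTranspose)).det).re) /
          Real.logb 2 ρ)
      atTop (nhds ((L : ℝ) / ((L : ℝ) + 1))) := by
  have hdet : (H.submatrix Fin.castSucc id).det = a ^ L := by
    rw [Matrix.det_of_lowerTriangular]
    · simp [hH]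
    · intro i j hij
      have h1 : (i : ℕ) < (j : ℕ) := by simpa using hij
      have h2 : (i : ℕ) ≠ (j : ℕ) := by omega
      have h3 : (i : ℕ) ≠ (j : ℕ) + 1 := by omega
      simp only [Matrix.submatrix_apply, hH, id, Fin.val_castSucc]
      rw [if_neg h2, if_neg h3]
  have hinj : Function.Injective H.mulVec := by
    rw [← Matrix.coe_mulVecLin, injective_iff_map_eq_zero]
    intro v hv
    apply Matrix.eq_zero_of_mulVec_eq_zero (M := H.submatrix Fin.castSucc id)
    · rw [hdet]; exact pow_ne_zero _ ha
    · funext i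
      exact congrFun hv (Fin.castSucc i)
  have hdp : 0 < ((H.conjTranspose * H).det).re := hdp_aux H hinj
  have hkey : ∀ ρ : ℝ, 0 < ρ → ((1 + (ρ : ℂ) • (H * H.conjTranspose)).det).re
      = ρ ^ L * ((((ρ⁻¹ : ℝ) : ℂ) • (1 : Matrix (Fin L) (Fin L) ℂ)
          + H.conjTranspose * H).det).re := by
    intro ρ hρ
    have hc : (ρ : ℂ) ≠ 0 := by exact_mod_cast hρ.ne'
    rw [← Matrix.smul_mul, Matrix.det_one_add_mul_comm, Matrix.mul_smul]
    have : (1 + (ρ : ℂ) • (H.conjTranspose * H)) = (ρ : ℂ) •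
        (((ρ⁻¹ : ℝ) : ℂ) • (1 : Matrix (Fin L) (Fin L) ℂ) + H.conjTranspose * H) := by
      rw [smul_add, smul_smul, Complex.ofReal_inv, mul_inv_cancel₀ hc, one_smul]
    rw [this, Matrix.det_smul, Fintype.card_fin, ← Complex.ofReal_pow, Complex.re_ofReal_mul]
  have hcont : Continuous (fun t : ℝ => (((t : ℂ) • (1 : Matrix (Fin L) (Fin L) ℂ)
          + H.conjTranspose * H).det).re) := by
    apply Complex.continuous_re.comp
    apply Continuous.matrix_det
    fun_prop
  have hlim := (hcont.tendsto 0).comp tendsto_inv_atTop_zero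
  simp only [Complex.ofReal_zero, zero_smul, zero_add] at hlim
  have hlog : Tendsto (fun ρ : ℝ => Real.logb 2 ρ) atTop atTop :=
    Real.tendsto_logb_atTop (by norm_num)
  have hlim2 := ((hlim.logb (b := 2) hdp.ne').div_atTop hlog).const_add (L : ℝ)
  have hlim3 := hlim2.const_mul (1 / ((L : ℝ) + 1))
  have e : 1 / ((L : ℝ) + 1) * ((L : ℝ) + 0) = (L : ℝ) / ((L : ℝ) + 1) := by ring
  rw [e] at hlim3
  refine hlim3.congr' ?_
  filter_upwards [eventually_gt_atTop 1, hlim.eventually (lt_mem_nhds hdp)] with ρ h1 h2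
  have hl : 0 < Real.logb 2 ρ := Real.logb_pos (by norm_num) h1
  have h0 : 0 < ρ := by linarith
  simp only [Function.comp] at h2 ⊢
  rw [hkey ρ h0, Real.logb_mul (pow_pos h0 _).ne' h2.ne', Real.logb_pow]
  field_simp
end

section
/- If a ≠ 0, then for any complex numbers c₁, c₂, the ratio G(ρ) = [ (1/(L+1)) log₂ det(I_{L+1} + ρ H Hᴴ) ] / [ (1/2) log₂(1 + ρ(|a|² + |c₁|² + |c₂|²)) ] satisfies lim_{ρ→∞} G(ρ) = 2L/(L+1). That is, the asymptotic capacity gain of the successive relaying scheme over Classic Protocol II (distributed Alamouti relaying) equals 2L/(L+1), which exceeds 1 for all L ≥ 2 and tends to 2 as L → ∞. -/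
open Matrix Filter

theorem aux_log (n : ℕ) (f g : ℝ → ℝ) (d : ℝ) (hd : 0 < d)
    (hg : Tendsto g atTop (nhds d)) (hf : ∀ᶠ x in atTop, f x = x ^ n * g x) :
    Tendsto (fun x => Real.logb 2 (f x) / Real.logb 2 x) atTop (nhds (n : ℝ)) := by
  have h1 : Tendsto (fun x => (n : ℝ) + Real.log (g x) / Real.log x) atTop (nhds ((n : ℝ) + 0)) := by
    refine tendsto_const_nhds.add ?_
    exact (hg.log hd.ne').div_atTop Real.tendsto_log_atTop
  rw [add_zero] at h1
  refine h1.congr' ?_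
  filter_upwards [hf, hg.eventually (lt_mem_nhds hd), eventually_gt_atTop 1] with x hx hgx hx1
  have hl : 0 < Real.log x := Real.log_pos hx1
  have h2 : Real.log 2 ≠ 0 := (Real.log_pos one_lt_two).ne'
  have hx0 : x ^ n ≠ 0 := by positivity
  rw [hx, Real.logb, Real.logb, Real.log_mul hx0 hgx.ne', Real.log_pow]
  field_simp

open ComplexOrder in
theorem aux_det_s15 (L : ℕ) (a : ℂ) (ha : a ≠ 0) (b : Fin L → ℂ)
    (H : Matrix (Fin (L + 1)) (Fin L) ℂ)
    (hH : ∀ i j, H i j =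
      if (i : ℕ) = (j : ℕ) then a else if (i : ℕ) = (j : ℕ) + 1 then b j else 0) :
    0 < ((H.conjTranspose * H).det).re := by
  have hdet : (H.submatrix Fin.castSucc id).det ≠ 0 := by
    rw [Matrix.det_of_lowerTriangular]
    · simp [hH, ha]
    · intro i j hij
      have hij' : (i : ℕ) < j := by simpa using hij
      simp only [submatrix_apply, hH, id, Fin.val_castSucc]
      rw [if_neg (by omega), if_neg (by omega)]
  have hinj : Function.Injective H.mulVec := by
    intro x y hxy
    have hT : Function.Injective (H.submatrix Fin.castSucc id).mulVec :=
      Matrix.mulVec_injective_of_isUnit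
        ((Matrix.isUnit_iff_isUnit_det _).2 (isUnit_iff_ne_zero.2 hdet))
    apply hT
    funext i
    exact congrFun hxy i.castSucc
  have := (Matrix.PosDef.conjTranspose_mul_self H hinj).det_pos
  exact (Complex.lt_def.1 this).1

/-- For the successive-relaying channel matrix `H` with `a ≠ 0`
and any `c₁, c₂ ∈ ℂ`, the capacity gain
`G(ρ) = [(1/(L+1)) log₂ det(I + ρ H Hᴴ)] / [(1/2) log₂(1 + ρ(|a|²+|c₁|²+|c₂|²))]`
over Classic Protocol II tends to `2L/(L+1)` as `ρ → ∞`. -/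
theorem stmt15 (L : ℕ) (hL : 1 ≤ L) (a : ℂ) (ha : a ≠ 0) (b : Fin L → ℂ)
    (H : Matrix (Fin (L + 1)) (Fin L) ℂ)
    (hH : ∀ i j, H i j =
      if (i : ℕ) = (j : ℕ) then a else if (i : ℕ) = (j : ℕ) + 1 then b j else 0)
    (c₁ c₂ : ℂ) :
    Tendsto (fun ρ : ℝ =>
        ((1 / ((L : ℝ) + 1)) *
            Real.logb 2 ((1 + (ρ : ℂ) • (H * H.conjTranspose)).det).re) /
          ((1 / 2) * Real.logb 2 (1 + ρ * (‖a‖ ^ 2 + ‖c₁‖ ^ 2 + ‖c₂‖ ^ 2))))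
      atTop (nhds (2 * (L : ℝ) / ((L : ℝ) + 1))) := by
  have hnum : Tendsto (fun ρ : ℝ =>
      Real.logb 2 ((1 + (ρ : ℂ) • (H * H.conjTranspose)).det).re / Real.logb 2 ρ)
      atTop (nhds (L : ℝ)) := by
    refine aux_log L _ (fun ρ => (((((ρ⁻¹ : ℝ) : ℂ)) • (1 : Matrix (Fin L) (Fin L) ℂ)
      + H.conjTranspose * H).det).re) _ (aux_det_s15 L a ha b H hH) ?_ ?_
    · have hc : Continuous (fun t : ℝ => (((t : ℂ) • (1 : Matrix (Fin L) (Fin L) ℂ)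
          + H.conjTranspose * H).det).re) := by
        refine Complex.continuous_re.comp (Continuous.matrix_det ?_)
        fun_prop
      have := (hc.tendsto 0).comp tendsto_inv_atTop_zero
      rw [Complex.ofReal_zero, zero_smul, zero_add] at this
      exact this
    · filter_upwards [eventually_gt_atTop 0] with ρ hρ
      have hρ' : (ρ : ℂ) ≠ 0 := by exact_mod_cast hρ.ne'
      rw [← Matrix.smul_mul, Matrix.det_one_add_mul_comm, Matrix.mul_smul]
      have e : (1 + (ρ : ℂ) • (H.conjTranspose * H)) = (ρ : ℂ) •
          ((((ρ⁻¹ : ℝ) : ℂ)) • (1 : Matrix (Fin L) (Fin L) ℂ) + H.conjTranspose * H) := by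
        rw [smul_add, smul_smul, Complex.ofReal_inv, mul_inv_cancel₀ hρ', one_smul]
      rw [e, Matrix.det_smul, Fintype.card_fin, ← Complex.ofReal_pow, Complex.re_ofReal_mul]
  have hden : Tendsto (fun ρ : ℝ =>
      Real.logb 2 (1 + ρ * (‖a‖ ^ 2 + ‖c₁‖ ^ 2 + ‖c₂‖ ^ 2)) / Real.logb 2 ρ)
      atTop (nhds ((1 : ℕ) : ℝ)) := by
    have hp : 0 < ‖a‖ := norm_pos_iff.2 ha
    refine aux_log 1 _ (fun ρ => ρ⁻¹ + (‖a‖ ^ 2 + ‖c₁‖ ^ 2 + ‖c₂‖ ^ 2)) 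
      (0 + (‖a‖ ^ 2 + ‖c₁‖ ^ 2 + ‖c₂‖ ^ 2)) (by positivity) 
      (tendsto_inv_atTop_zero.add tendsto_const_nhds) ?_
    filter_upwards [eventually_gt_atTop 0] with ρ hρ
    field_simp
  have hq := (hnum.const_mul (1 / ((L : ℝ) + 1))).div (hden.const_mul (1 / 2)) (by norm_num)
  have hlim : 1 / ((L : ℝ) + 1) * L / (1 / 2 * ((1 : ℕ) : ℝ)) = 2 * (L : ℝ) / ((L : ℝ) + 1) := by
    push_cast
    field_simp
  rw [hlim] at hq
  refine hq.congr' ?_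
  filter_upwards [eventually_gt_atTop 1] with ρ hρ
  have hl : Real.logb 2 ρ ≠ 0 := (Real.logb_pos one_lt_two hρ).ne'
  simp only [Pi.div_apply]
  rw [← mul_div_assoc, ← mul_div_assoc, div_div_div_cancel_right₀ hl]
end
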